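/- Let G be a finite connected cactus containing at least one cycle, let g be its girth (which is finite), and let a ≥ b ≥ 1 be integers. If g ≥ 4, or if every cycle of G has length three, then fsep(G, a, b) = fsep(C_g, a, b). -/

import Mathlib

open SimpleGraph Finset

/-- An `(L,b)`-coloring of `G`: each vertex `v` receives a set `φ v ⊆ L v` with
`|φ v| = b`, and adjacent vertices receive disjoint sets. -/
def IsLbColoring {V : Type*} (G : SimpleGraph V) (L : V → Finset ℕ) (b : ℕ)
    (φ : V → Finset ℕ) : Prop :=
  (∀ v, φ v ⊆ L v ∧ (φ v).card = b) ∧ ∀ u v, G.Adj u v → φ u ∩ φ v = ∅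

/-- `G` is `(a,b,c)`-choosable: every `c`-separating `a`-list assignment admits an
`(L,b)`-coloring. -/
def Choosable {V : Type*} (G : SimpleGraph V) (a b c : ℕ) : Prop :=
  ∀ L : V → Finset ℕ, (∀ v, (L v).card = a) →
    (∀ u v, G.Adj u v → (L u ∩ L v).card ≤ c) →
    ∃ φ, IsLbColoring G L b φ

/-- `G` is `(a,b,c)`-free-choosable: for every `c`-separating `a`-list assignment,
any precoloring of one vertex by a `b`-subset of its list extends to an `(L,b)`-coloring. -/
def FreeChoosable {V : Type*} (G : SimpleGraph V) (a b c : ℕ) : Prop :=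
  ∀ L : V → Finset ℕ, (∀ v, (L v).card = a) →
    (∀ u v, G.Adj u v → (L u ∩ L v).card ≤ c) →
    ∀ (v₀ : V) (C : Finset ℕ), C ⊆ L v₀ → C.card = b →
      ∃ φ, IsLbColoring G L b φ ∧ φ v₀ = C

/-- The separation number `sep(G,a,b)`: the largest `c ≤ a` such that `G` is
`(a,b,c)`-choosable. -/
noncomputable def sep {V : Type*} (G : SimpleGraph V) (a b : ℕ) : ℕ :=
  sSup {c | c ≤ a ∧ Choosable G a b c}

/-- The free-separation number `fsep(G,a,b)`: the largest `c ≤ a` such that `G` is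
`(a,b,c)`-free-choosable. -/
noncomputable def fsep {V : Type*} (G : SimpleGraph V) (a b : ℕ) : ℕ :=
  sSup {c | c ≤ a ∧ FreeChoosable G a b c}

/-- A cactus: a connected graph in which every edge belongs to at most one cycle
(any two cycles sharing an edge have the same edge set). -/
def IsCactus {V : Type*} (G : SimpleGraph V) : Prop :=
  G.Connected ∧ ∀ (u v : V) (p : G.Walk u u) (q : G.Walk v v),
    p.IsCycle → q.IsCycle → (∃ e, e ∈ p.edges ∧ e ∈ q.edges) →
      ∀ e, e ∈ p.edges ↔ e ∈ q.edges

/-- In a cactus, distinct vertices of a cycle are separated by deleting the edges of the cycle. -/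
theorem not_reachable_deleteEdges_of_mem_cycle {V : Type*} {G : SimpleGraph V}
    (hG : ∀ (u v : V) (p : G.Walk u u) (q : G.Walk v v), p.IsCycle → q.IsCycle →
      (∃ e, e ∈ p.edges ∧ e ∈ q.edges) → ∀ e, e ∈ p.edges ↔ e ∈ q.edges)
    {x : V} (p : G.Walk x x) (hp : p.IsCycle) {u v : V} (hu : u ∈ p.support)
    (hv : v ∈ p.support) (huv : u ≠ v) :
    ¬ (G.deleteEdges {e | e ∈ p.edges}).Reachable u v := by
  classical
  rintro ⟨q⟩
  set r := p.rotate u hu with hr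
  have hrc : r.IsCycle := (Walk.isCycle_rotate hu).2 hp
  have hre : ∀ e, e ∈ r.edges ↔ e ∈ p.edges := fun e => (p.rotate_edges u hu).mem_iff
  have hvr : v ∈ r.support := (Walk.mem_support_rotate_iff p u hu).2 hv
  have hnodup := hrc.isTrail.edges_nodup
  have hspec := r.take_spec hvr
  generalize r.takeUntil v hvr = P at hspec
  generalize r.dropUntil v hvr = Q at hspec
  rw [← hspec, Walk.edges_append] at hnodup
  have hmem : ∀ e, e ∈ p.edges ↔ e ∈ P.edges ∨ e ∈ Q.edges := by
    intro e; rw [← hre, ← hspec, Walk.edges_append, List.mem_append]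
  cases P with
  | nil => exact huv rfl
  | @cons _ y _ h P =>
  cases Q with
  | nil => exact huv rfl
  | @cons _ z _ h' Q =>
  simp only [Walk.edges_cons, List.cons_append, List.nodup_cons, List.mem_append,
    List.mem_cons, not_or] at hnodup hmem
  obtain ⟨⟨hfP, hff', -⟩, hrest⟩ := hnodup
  rw [List.nodup_append] at hrest
  have hreach : ((G.deleteEdges {s(v, z)}).deleteEdges {s(u, y)}).Reachable u y := by
    have h₁ : ((G.deleteEdges {s(v, z)}).deleteEdges {s(u, y)}).Reachable u v := by
      refine ⟨q.mapLe ?_⟩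
      rw [deleteEdges_deleteEdges]
      apply deleteEdges_anti
      rintro e (rfl | rfl)
      · exact (hmem _).2 (by simp)
      · exact (hmem _).2 (by simp)
    have h₂ : ((G.deleteEdges {s(v, z)}).deleteEdges {s(u, y)}).Reachable y v := by
      refine ⟨P.transfer _ fun e he => ?_⟩
      simp only [edgeSet_deleteEdges, Set.mem_sdiff, Set.mem_singleton_iff]
      refine ⟨⟨P.edges_subset_edgeSet he, ?_⟩, ?_⟩
      · rintro rfl; exact hrest.2.2 _ he _ (by simp) rfl
      · rintro rfl; exact hfP he
    exact h₁.trans h₂.symm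
  obtain ⟨w, c, hc, hfc⟩ := adj_and_reachable_delete_edges_iff_exists_cycle.1
    ⟨deleteEdges_adj.2 ⟨h, hff'⟩, hreach⟩
  have hle : G.deleteEdges {s(v, z)} ≤ G := deleteEdges_le _
  have := (hG _ _ p (c.mapLe hle) hp (hc.mapLe hle)
    ⟨s(u, y), (hmem _).2 (by simp), by simpa using hfc⟩ s(v, z)).1 ((hmem _).2 (by simp))
  rw [Walk.edges_mapLe_eq_edges] at this
  simpa using c.edges_subset_edgeSet this

/-- A cycle is the image of a cycle graph under an injective map. -/
theorem exists_cycle_parametrization {V : Type*} {G : SimpleGraph V} {x : V} (p : G.Walk x x)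
    (hp : p.IsCycle) :
    ∃ f : Fin p.length → V, Function.Injective f ∧ (∀ i, f i ∈ p.support) ∧
      (∀ v ∈ p.support, ∃ i, f i = v) ∧
      ∀ i j, (cycleGraph p.length).Adj i j ↔ s(f i, f j) ∈ p.edges := by
  have hlen := hp.three_le_length
  have hinj : ∀ i j : Fin p.length, p.getVert i = p.getVert j → i = j := fun i j h =>
    Fin.ext (hp.getVert_injOn' (by simp; omega) (by simp; omega) h)
  refine ⟨fun i => p.getVert i, hinj, fun i => p.getVert_mem_support i, ?_, ?_⟩
  · intro v hv
    obtain ⟨n, rfl, hn⟩ := Walk.mem_support_iff_exists_getVert.1 hv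
    rcases hn.lt_or_eq with h | h
    · exact ⟨⟨n, h⟩, rfl⟩
    · exact ⟨⟨0, by omega⟩, by simp [h]⟩
  · have hsucc : ∀ i j : Fin p.length, (j - i).val = 1 ↔ p.getVert (i + 1) = p.getVert j := by
      intro i j
      have key : (j - i).val = 1 ↔ (i.val + 1 = j.val ∨ i.val + 1 = p.length ∧ j.val = 0) := by
        rw [Fin.sub_def]
        have hi := i.2
        have hj := j.2
        rcases le_or_gt i.val j.val with h | h
        · have : (p.length - i.val + j.val) % p.length = j.val - i.val := by
            rw [show p.length - i.val + j.val = (j.val - i.val) + p.length by omega,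
              Nat.add_mod_right, Nat.mod_eq_of_lt (by omega)]
          simp only [this]; omega
        · have : (p.length - i.val + j.val) % p.length = p.length - i.val + j.val :=
            Nat.mod_eq_of_lt (by omega)
          simp only [this]; omega
      rw [key]
      rcases (show i.val + 1 ≤ p.length from i.2).lt_or_eq with h | h
      · constructor
        · rintro (h' | h')
          · rw [h']
          · omega
        · intro h'
          left
          exact congrArg Fin.val (hinj ⟨i + 1, h⟩ j h')
      · rw [h, Walk.getVert_length]
        constructor
        · rintro (h' | h')
          · omega
          · simp [h'.2]
        · intro h'
          right
          refine ⟨rfl, ?_⟩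
          have := hinj ⟨0, by omega⟩ j (by simpa using h')
          rw [← this]
    intro i j
    rw [cycleGraph_adj', ← Walk.adj_toSubgraph_iff_mem_edges, Walk.toSubgraph_adj_iff,
      hsucc, hsucc]
    constructor
    · rintro (h | h)
      · exact ⟨j, by rw [h, Sym2.eq_swap], j.2⟩
      · exact ⟨i, by rw [h], i.2⟩
    · rintro ⟨k, h, hk⟩
      rw [Sym2.eq_iff] at h
      rcases h with ⟨h₁, h₂⟩ | ⟨h₁, h₂⟩
      · right; have := hinj ⟨k, hk⟩ i h₁; rw [← this]; exact h₂
      · left; have := hinj ⟨k, hk⟩ j h₁; rw [← this]; exact h₂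

theorem FreeChoosable.choosable {V : Type*} {G : SimpleGraph V} {a b c : ℕ}
    (h : FreeChoosable G a b c) (hba : b ≤ a) : Choosable G a b c := by
  intro L hL hsep
  rcases isEmpty_or_nonempty V with hV | ⟨⟨v⟩⟩
  · exact ⟨fun _ => ∅, fun v => hV.elim v, fun v => hV.elim v⟩
  · obtain ⟨C, hC, hCb⟩ := Finset.exists_subset_card_eq ((hL v).symm ▸ hba)
    obtain ⟨φ, hφ, -⟩ := h L hL hsep v C hC hCb
    exact ⟨φ, hφ⟩

/-- Adding isolated vertices preserves free choosability. -/
theorem FreeChoosable.of_injective {V W : Type*} {G : SimpleGraph V} {H : SimpleGraph W}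
    {a b c : ℕ} (hH : FreeChoosable H a b c) (hba : b ≤ a) (f : W → V)
    (hf : Function.Injective f) (hadj : ∀ i j, H.Adj i j → G.Adj (f i) (f j))
    (hsurj : ∀ u v, G.Adj u v → ∃ i j, f i = u ∧ f j = v ∧ H.Adj i j) :
    FreeChoosable G a b c := by
  classical
  intro L hL hsep v₀ C hC hCb
  have hLf : ∀ i, (L (f i)).card = a := fun i => hL _
  have hsepf : ∀ i j, H.Adj i j → (L (f i) ∩ L (f j)).card ≤ c :=
    fun i j h => hsep _ _ (hadj i j h)
  obtain ⟨ψ, hψ, hψC⟩ : ∃ ψ, IsLbColoring H (fun i => L (f i)) b ψ ∧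
      ∀ i, f i = v₀ → ψ i = C := by
    by_cases hv : ∃ i, f i = v₀
    · obtain ⟨i, rfl⟩ := hv
      obtain ⟨ψ, hψ, hi⟩ := hH _ hLf hsepf i C hC hCb
      exact ⟨ψ, hψ, fun j hj => hf hj ▸ hi⟩
    · obtain ⟨ψ, hψ⟩ := hH.choosable hba _ hLf hsepf
      exact ⟨ψ, hψ, fun i hi => (hv ⟨i, hi⟩).elim⟩
  have hdef : ∀ v, ∃ D ⊆ L v, D.card = b ∧ (v = v₀ → D = C) := by
    intro v
    by_cases hv : v = v₀
    · subst hv; exact ⟨C, hC, hCb, fun _ => rfl⟩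
    · obtain ⟨D, hD, hDb⟩ := Finset.exists_subset_card_eq ((hL v).symm ▸ hba)
      exact ⟨D, hD, hDb, fun h => (hv h).elim⟩
  choose D hDL hDb hDC using hdef
  have hval : ∀ i, Function.extend f ψ D (f i) = ψ i := fun i => hf.extend_apply ψ D i
  refine ⟨Function.extend f ψ D, ⟨fun v => ?_, fun u v huv => ?_⟩, ?_⟩
  · by_cases hv : ∃ i, f i = v
    · obtain ⟨i, rfl⟩ := hv
      rw [hval]; exact hψ.1 i
    · rw [Function.extend_apply' _ _ _ hv]; exact ⟨hDL v, hDb v⟩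
  · obtain ⟨i, j, rfl, rfl, hij⟩ := hsurj u v huv
    rw [hval, hval]; exact hψ.2 i j hij
  · by_cases hv : ∃ i, f i = v₀
    · obtain ⟨i, hi⟩ := hv
      rw [← hi, hval, hψC i hi]
    · rw [Function.extend_apply' _ _ _ hv, hDC v₀ rfl]

/-- Free choosability passes to induced subgraphs. -/
theorem FreeChoosable.of_induced {V W : Type*} [Finite V] [Finite W] {G : SimpleGraph V}
    {H : SimpleGraph W} {a b c : ℕ} (hG : FreeChoosable G a b c) (f : W → V)
    (hf : Function.Injective f) (hadj : ∀ i j, H.Adj i j ↔ G.Adj (f i) (f j)) :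
    FreeChoosable H a b c := by
  classical
  intro L hL hsep w₀ C hC hCb
  have := Fintype.ofFinite W
  obtain ⟨n, ⟨e⟩⟩ := Finite.exists_equiv_fin V
  obtain ⟨N, hN⟩ : ∃ N, ∀ w, ∀ k ∈ L w, k < N := by
    refine ⟨(Finset.univ.biUnion L).sup id + 1, fun w k hk => Nat.lt_succ_of_le ?_⟩
    exact Finset.le_sup (f := id) (Finset.mem_biUnion.2 ⟨w, Finset.mem_univ _, hk⟩)
  let F : V → Finset ℕ := fun v => (Finset.range a).image fun j => N + Nat.pair (e v) j
  have hF : ∀ v, (F v).card = a := fun v => by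
    rw [Finset.card_image_of_injective, Finset.card_range]
    intro i j hij
    simpa using hij
  have hFF : ∀ u v, u ≠ v → F u ∩ F v = ∅ := by
    intro u v huv
    rw [← Finset.disjoint_iff_inter_eq_empty, Finset.disjoint_left]
    simp only [F, Finset.mem_image, not_exists]
    rintro x ⟨i, -, rfl⟩ j ⟨-, h⟩
    simp [Fin.val_inj] at h
    exact huv h.1.symm
  have hFL : ∀ w v, L w ∩ F v = ∅ := by
    intro w v
    rw [← Finset.disjoint_iff_inter_eq_empty, Finset.disjoint_left]
    intro k hk hkF
    simp only [F, Finset.mem_image] at hkF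
    obtain ⟨i, -, rfl⟩ := hkF
    have := hN w _ hk
    omega
  have hval : ∀ i, Function.extend f L F (f i) = L i := fun i => hf.extend_apply L F i
  have hval' : ∀ v, (¬ ∃ i, f i = v) → Function.extend f L F v = F v :=
    fun v hv => Function.extend_apply' _ _ _ hv
  obtain ⟨φ, hφ, hφC⟩ := hG (Function.extend f L F) (fun v => by
      by_cases hv : ∃ i, f i = v
      · obtain ⟨i, rfl⟩ := hv
        rw [hval, hL]
      · rw [hval' v hv, hF]) (fun u v huv => by
      by_cases hu : ∃ i, f i = u <;> by_cases hv : ∃ i, f i = v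
      · obtain ⟨i, rfl⟩ := hu
        obtain ⟨j, rfl⟩ := hv
        rw [hval, hval]; exact hsep i j ((hadj i j).2 huv)
      · obtain ⟨i, rfl⟩ := hu
        rw [hval, hval' v hv, hFL]; simp
      · obtain ⟨i, rfl⟩ := hv
        rw [hval, hval' u hu, Finset.inter_comm, hFL]; simp
      · rw [hval' u hu, hval' v hv, hFF u v huv.ne]; simp) (f w₀) C (by rwa [hval]) hCb
  refine ⟨fun w => φ (f w), ⟨fun w => ?_, fun u v huv => hφ.2 _ _ ((hadj u v).1 huv)⟩, hφC⟩
  have := hφ.1 (f w)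
  rwa [hval] at this

/-- Free choosability of two graphs passes to their union when the support of the second
meets each component of the first in at most one vertex. -/
theorem FreeChoosable.sup {V : Type*} {G H : SimpleGraph V} {a b c : ℕ}
    (hG : FreeChoosable G a b c) (hH : FreeChoosable H a b c)
    (hsep : ∀ u v, u ∈ H.support → v ∈ H.support → G.Reachable u v → u = v) :
    FreeChoosable (G ⊔ H) a b c := by
  classical
  intro L hL hLsep v₀ C hC hCb
  have hLG : ∀ u v, G.Adj u v → (L u ∩ L v).card ≤ c := fun u v h => hLsep u v (Or.inl h)
  have hLH : ∀ u v, H.Adj u v → (L u ∩ L v).card ≤ c := fun u v h => hLsep u v (Or.inr h)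
  obtain ⟨φ, hφ, hφC⟩ := hG L hL hLG v₀ C hC hCb
  obtain ⟨ψ, hψ, hψφ⟩ : ∃ ψ, IsLbColoring H L b ψ ∧
      ∀ r ∈ H.support, G.Reachable v₀ r → ψ r = φ r := by
    by_cases hr : ∃ r ∈ H.support, G.Reachable v₀ r
    · obtain ⟨r, hrH, hrr⟩ := hr
      obtain ⟨ψ, hψ, h⟩ := hH L hL hLH r (φ r) (hφ.1 r).1 (hφ.1 r).2
      refine ⟨ψ, hψ, fun s hs hsr => ?_⟩
      rw [← hsep r s hrH hs (hrr.symm.trans hsr), h]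
    · obtain ⟨ψ, hψ, -⟩ := hH L hL hLH v₀ C hC hCb
      exact ⟨ψ, hψ, fun r hr' h => (hr ⟨r, hr', h⟩).elim⟩
  choose θ hθ hθψ using fun w => hG L hL hLG w (ψ w) (hψ.1 w).1 (hψ.1 w).2
  -- recolor the component of each support vertex not connected to the precolored vertex
  let χ : V → V → Finset ℕ := fun w => if G.Reachable v₀ w then φ else θ w
  have hχ : ∀ w, IsLbColoring G L b (χ w) := fun w => by
    by_cases h : G.Reachable v₀ w
    · simpa [χ, h] using hφ
    · simpa [χ, h] using hθ w
  have hχψ : ∀ w ∈ H.support, χ w w = ψ w := fun w hw => by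
    by_cases h : G.Reachable v₀ w
    · simpa [χ, h] using (hψφ w hw h).symm
    · simpa [χ, h] using hθψ w
  have hrep : ∀ x, ∃ w, G.Reachable x w ∧ ∀ s ∈ H.support, G.Reachable x s → w = s := by
    intro x
    by_cases hx : ∃ s ∈ H.support, G.Reachable x s
    · obtain ⟨s, hs, hxs⟩ := hx
      exact ⟨s, hxs, fun t ht hxt => hsep s t hs ht (hxs.symm.trans hxt)⟩
    · exact ⟨x, Reachable.refl x, fun s hs hxs => (hx ⟨s, hs, hxs⟩).elim⟩
  choose rep₀ hrep₀ hrep₀' using hrep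
  let rep : V → V := fun x => rep₀ (G.connectedComponentMk x).out
  have hout : ∀ x, G.Reachable (G.connectedComponentMk x).out x := fun x =>
    ConnectedComponent.exact (Quot.out_eq _)
  have hrepr : ∀ x, G.Reachable x (rep x) := fun x => (hout x).symm.trans (hrep₀ _)
  have hreps : ∀ x ∈ H.support, rep x = x := fun x hx => hrep₀' _ x hx (hout x)
  have hrepG : ∀ x y, G.Adj x y → rep x = rep y := fun x y h => by
    simp only [rep, ConnectedComponent.sound h.reachable]
  refine ⟨fun x => χ (rep x) x, ⟨fun x => (hχ _).1 x, ?_⟩, ?_⟩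
  · rintro u v (h | h)
    · dsimp only
      rw [hrepG u v h]; exact (hχ _).2 u v h
    · have hu : u ∈ H.support := ⟨v, h⟩
      have hv : v ∈ H.support := ⟨u, h.symm⟩
      dsimp only
      rw [hreps u hu, hreps v hv, hχψ u hu, hχψ v hv]; exact hψ.2 u v h
  · simp [χ, hrepr v₀, hφC]

theorem freeChoosable_top_bool {a b c : ℕ} (h : b + min b c ≤ a) :
    FreeChoosable (⊤ : SimpleGraph Bool) a b c := by
  intro L hL hsep v₀ C hC hCb
  have hcard : b ≤ (L (!v₀) \ C).card := by
    have h₁ : (C ∩ L (!v₀)).card ≤ c :=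
      (Finset.card_le_card (Finset.inter_subset_inter_right hC)).trans (hsep v₀ (!v₀) (by simp))
    have h₂ : (C ∩ L (!v₀)).card ≤ b := hCb ▸ Finset.card_le_card Finset.inter_subset_left
    have h₃ := Finset.card_sdiff (s := C) (t := L (!v₀))
    rw [hL] at h₃
    omega
  obtain ⟨D, hD, hDb⟩ := Finset.exists_subset_card_eq hcard
  have hDL := hD.trans Finset.sdiff_subset
  have hCD : C ∩ D = ∅ := by
    rw [← Finset.disjoint_iff_inter_eq_empty]
    exact (Finset.disjoint_of_subset_left hD Finset.sdiff_disjoint).symm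
  have hDC : D ∩ C = ∅ := by rw [Finset.inter_comm, hCD]
  refine ⟨fun v => if v = v₀ then C else D, ⟨?_, ?_⟩, by simp⟩
  · intro v
    cases v <;> cases v₀ <;> simp_all
  · intro u v
    cases u <;> cases v <;> cases v₀ <;> simp_all

theorem freeChoosable_fromEdgeSet_singleton {V : Type*} {a b c : ℕ} (hba : b + min b c ≤ a)
    {u v : V} (huv : u ≠ v) : FreeChoosable (fromEdgeSet {s(u, v)}) a b c := by
  have huv' := huv.symm
  refine (freeChoosable_top_bool hba).of_injective (by omega) (fun t => cond t u v) ?_ ?_ ?_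
  · intro i j
    cases i <;> cases j <;> simp [huv, huv']
  · intro i j
    cases i <;> cases j <;> simp [huv, huv']
  · intro x y hxy
    simp only [fromEdgeSet_adj, Set.mem_singleton_iff, Sym2.eq_iff] at hxy
    rcases hxy.1 with ⟨rfl, rfl⟩ | ⟨rfl, rfl⟩
    · exact ⟨true, false, by simp⟩
    · exact ⟨false, true, by simp⟩

/-- A finite graph in which no edge lies on two cycles is free-choosable as soon as an edge and
each of its cycles are. -/
theorem freeChoosable_of_cycles {V : Type*} [Finite V] {a b c : ℕ} (hba : b + min b c ≤ a)
    (G : SimpleGraph V)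
    (hG : ∀ (u v : V) (p : G.Walk u u) (q : G.Walk v v), p.IsCycle → q.IsCycle →
      (∃ e, e ∈ p.edges ∧ e ∈ q.edges) → ∀ e, e ∈ p.edges ↔ e ∈ q.edges)
    (hcyc : ∀ (u : V) (p : G.Walk u u), p.IsCycle → FreeChoosable (cycleGraph p.length) a b c) :
    FreeChoosable G a b c := by
  have hba' : b ≤ a := by omega
  induction G using WellFoundedLT.induction with
  | ind G ih =>
  have ih' : ∀ s : Set (Sym2 V), G.deleteEdges s < G →
      FreeChoosable (G.deleteEdges s) a b c := by
    intro s hs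
    refine ih _ hs (fun u v p q hp hq ⟨e, he, he'⟩ e₁ => ?_) (fun u p hp => ?_)
    · simpa using hG u v (p.mapLe hs.le) (q.mapLe hs.le) (hp.mapLe _) (hq.mapLe _)
        ⟨e, by simpa using he, by simpa using he'⟩ e₁
    · have h := hcyc u (p.mapLe hs.le) (hp.mapLe _)
      rwa [show (p.mapLe hs.le).length = p.length by simp] at h
  have hlt : ∀ (s : Set (Sym2 V)) (u v : V), G.Adj u v → s(u, v) ∈ s → G.deleteEdges s < G := by
    intro s u v huv hs
    refine lt_of_le_of_ne (deleteEdges_le s) fun h => ?_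
    rw [← h, deleteEdges_adj] at huv
    exact huv.2 hs
  have hsup : ∀ s : Set (Sym2 V), s ⊆ G.edgeSet → G.deleteEdges s ⊔ fromEdgeSet s = G := by
    intro s hs
    ext u v
    simp only [sup_adj, deleteEdges_adj, fromEdgeSet_adj]
    have : s(u, v) ∈ s → G.Adj u v := fun h => hs h
    have : G.Adj u v → u ≠ v := fun h => h.ne
    tauto
  by_cases hac : G.IsAcyclic
  · by_cases hE : ∃ u v, G.Adj u v
    · obtain ⟨u, v, huv⟩ := hE
      have hbr := isBridge_iff.1 (isAcyclic_iff_forall_adj_isBridge.1 hac huv)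
      rw [← hsup {s(u, v)} (by simpa using huv)]
      refine (ih' _ (hlt _ u v huv (Set.mem_singleton _))).sup ?_ ?_
      · exact freeChoosable_fromEdgeSet_singleton hba huv.ne
      · rintro x y ⟨x', hx⟩ ⟨y', hy⟩ hxy
        by_contra hne
        simp only [fromEdgeSet_adj, Set.mem_singleton_iff, Sym2.eq_iff] at hx hy
        rcases hx.1 with ⟨rfl, rfl⟩ | ⟨rfl, rfl⟩ <;> rcases hy.1 with ⟨rfl, rfl⟩ | ⟨rfl, rfl⟩
        · exact hne rfl
        · exact hbr hxy
        · exact hbr hxy.symm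
        · exact hne rfl
    · push Not at hE
      exact FreeChoosable.of_injective (H := (⊥ : SimpleGraph Empty)) (fun _ _ _ v => v.elim) hba'
        Empty.elim (fun v => v.elim) (fun v => v.elim) fun u v huv => (hE u v huv).elim
  · simp only [IsAcyclic, not_forall, not_not] at hac
    obtain ⟨x, p, hp⟩ := hac
    obtain ⟨f, hf, hfs, hfs', hfadj⟩ := exists_cycle_parametrization p hp
    have hsub : {e | e ∈ p.edges} ⊆ G.edgeSet := fun e he => p.edges_subset_edgeSet he
    rw [← hsup _ hsub]
    have hadj : G.Adj x p.snd := p.adj_snd hp.not_nil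
    refine (ih' _ (hlt _ x p.snd hadj (p.mk_start_snd_mem_edges hp.not_nil))).sup ?_ ?_
    · refine (hcyc x p hp).of_injective hba' f hf ?_ ?_
      · intro i j hij
        exact (fromEdgeSet_adj _).2 ⟨(hfadj i j).1 hij, hf.ne hij.ne⟩
      · intro u v huv
        have huv' : s(u, v) ∈ p.edges := ((fromEdgeSet_adj _).1 huv).1
        obtain ⟨i, rfl⟩ := hfs' u (p.fst_mem_support_of_mem_edges huv')
        obtain ⟨j, rfl⟩ := hfs' v (p.snd_mem_support_of_mem_edges huv')
        exact ⟨i, j, rfl, rfl, (hfadj i j).2 huv'⟩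
    · rintro u v ⟨u', hu⟩ ⟨v', hv⟩ huv
      by_contra hne
      exact not_reachable_deleteEdges_of_mem_cycle hG p hp
        (p.fst_mem_support_of_mem_edges ((fromEdgeSet_adj _).1 hu).1)
        (p.fst_mem_support_of_mem_edges ((fromEdgeSet_adj _).1 hv).1) hne huv

theorem exists_subset_card_eq_forall_le {α : Type*} [DecidableEq α] (W : Finset α) (f : α → ℕ)
    {b : ℕ} (hb : b ≤ W.card) :
    ∃ T ⊆ W, T.card = b ∧ ∀ t ∈ T, ∀ w ∈ W \ T, f t ≤ f w := by
  induction b with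
  | zero => exact ⟨∅, by simp, rfl, by simp⟩
  | succ b ih =>
    obtain ⟨T, hTW, hTb, hT⟩ := ih (by omega)
    have hne : (W \ T).Nonempty := by
      rw [← Finset.card_pos, Finset.card_sdiff_of_subset hTW]; omega
    obtain ⟨m, hm, hmin⟩ := Finset.exists_min_image (W \ T) f hne
    have hm' := Finset.mem_sdiff.1 hm
    refine ⟨insert m T, Finset.insert_subset hm'.1 hTW, by
      rw [Finset.card_insert_of_notMem hm'.2, hTb], ?_⟩
    intro t ht w hw
    have hw' : w ∈ W \ T := by
      simp only [Finset.mem_sdiff, Finset.mem_insert, not_or] at hw ⊢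
      exact ⟨hw.1, hw.2.2⟩
    rcases Finset.mem_insert.1 ht with rfl | ht
    · exact hmin w hw'
    · exact hT t ht w hw'

/-- Bases of the laminar matroid given by a chain of sets with capacities. -/
theorem exists_subset_of_chain {α ι : Type*} [DecidableEq α] (W : Finset α) (I : Finset ι)
    (X : ι → Finset α) (hX : ∀ p ∈ I, ∀ q ∈ I, X p ⊆ X q ∨ X q ⊆ X p) (h : ι → ℤ)
    (hnonneg : ∀ p ∈ I, 0 ≤ h p) {b : ℕ} (hb : b ≤ W.card)
    (hcap : ∀ p ∈ I, (b : ℤ) ≤ (W \ X p).card + h p) :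
    ∃ T ⊆ W, T.card = b ∧ ∀ p ∈ I, ((T ∩ X p).card : ℤ) ≤ h p := by
  classical
  obtain ⟨T, hTW, hTb, hT⟩ :=
    exists_subset_card_eq_forall_le W (fun x => (I.filter fun p => x ∈ X p).card) hb
  refine ⟨T, hTW, hTb, fun p hp => ?_⟩
  rcases (T ∩ X p).eq_empty_or_nonempty with he | ⟨x, hx⟩
  · simpa [he] using hnonneg p hp
  obtain ⟨hxT, hxp⟩ := Finset.mem_inter.1 hx
  have hsub : W \ X p ⊆ T \ X p := by
    intro y hy
    obtain ⟨hyW, hyp⟩ := Finset.mem_sdiff.1 hy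
    refine Finset.mem_sdiff.2 ⟨?_, hyp⟩
    by_contra hyT
    refine (hT x hxT y (Finset.mem_sdiff.2 ⟨hyW, hyT⟩)).not_gt (Finset.card_lt_card ?_)
    refine Finset.ssubset_iff_subset_ne.2 ⟨fun q hq => ?_, fun heq => ?_⟩
    · simp only [Finset.mem_filter] at hq ⊢
      refine ⟨hq.1, (hX p hp q hq.1).elim (fun hs => hs hxp) fun hs => (hyp (hs hq.2)).elim⟩
    · have : p ∈ I.filter fun q => y ∈ X q := by rw [heq]; simp [hp, hxp]
      exact hyp (Finset.mem_filter.1 this).2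
  have h₁ := Finset.card_le_card hsub
  have h₂ := Finset.card_inter_add_card_sdiff T (X p)
  have h₃ := hcap p hp
  omega

/-- The colors that the greedy choice of independent sets, run from vertex `p` along a path with
lists `A`, takes at vertex `p + k`. -/
def greedy (A : ℕ → Finset ℕ) (p : ℕ) : ℕ → Finset ℕ
  | 0 => A p
  | k + 1 => A (p + k + 1) \ greedy A p k

/-- The surplus of the greedy choice over the demand `b` at each of the vertices `p, …, p + k`. -/
def surplus (A : ℕ → Finset ℕ) (b p : ℕ) : ℕ → ℤ
  | 0 => (A p).card - b
  | k + 1 => surplus A b p k + (greedy A p (k + 1)).card - b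

theorem greedy_chain (A : ℕ → Finset ℕ) (i : ℕ) :
    ∀ p ≤ i, ∀ q ≤ i, greedy A p (i - p) ⊆ greedy A q (i - q) ∨
      greedy A q (i - q) ⊆ greedy A p (i - p) := by
  induction i with
  | zero =>
    intro p hp q hq
    obtain rfl : p = 0 := by omega
    obtain rfl : q = 0 := by omega
    exact Or.inl subset_rfl
  | succ i ih =>
    have hstep : ∀ p ≤ i, greedy A p (i + 1 - p) = A (i + 1) \ greedy A p (i - p) := by
      intro p hp
      rw [Nat.succ_sub hp, greedy, show p + (i - p) + 1 = i + 1 by omega]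
    have hself : greedy A (i + 1) (i + 1 - (i + 1)) = A (i + 1) := by simp [greedy]
    intro p hp q hq
    rcases Nat.lt_or_eq_of_le hp with hp | rfl <;> rcases Nat.lt_or_eq_of_le hq with hq | rfl
    · rw [hstep p (by omega), hstep q (by omega)]
      exact (ih p (by omega) q (by omega)).symm.imp
        (Finset.sdiff_subset_sdiff subset_rfl) (Finset.sdiff_subset_sdiff subset_rfl)
    · rw [hstep p (by omega), hself]; exact Or.inl Finset.sdiff_subset
    · rw [hstep q (by omega), hself]; exact Or.inr Finset.sdiff_subset
    · exact Or.inl subset_rfl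

/-- A Hall-type theorem for multicolorings of a path, with a set `S` of colors forbidden at the
last vertex. -/
theorem exists_path_coloring_avoiding (A : ℕ → Finset ℕ) (b i : ℕ)
    (hH : ∀ p k, p + k ≤ i → 0 ≤ surplus A b p k) (S : Finset ℕ)
    (hS : ∀ p ≤ i, ((S ∩ greedy A p (i - p)).card : ℤ) ≤ surplus A b p (i - p)) :
    ∃ φ : ℕ → Finset ℕ, (∀ j ≤ i, φ j ⊆ A j ∧ (φ j).card = b) ∧
      (∀ j < i, Disjoint (φ j) (φ (j + 1))) ∧ Disjoint (φ i) S := by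
  induction i generalizing S with
  | zero =>
    have h := hS 0 le_rfl
    simp only [Nat.sub_zero, greedy, surplus] at h
    have h' := Finset.card_sdiff (s := S) (t := A 0)
    have h'' : (S ∩ A 0).card ≤ (A 0).card := Finset.card_le_card Finset.inter_subset_right
    obtain ⟨T, hT, hTb⟩ := Finset.exists_subset_card_eq (s := A 0 \ S) (n := b) (by omega)
    refine ⟨fun _ => T, fun j hj => ?_, fun j hj => by omega,
      Finset.disjoint_of_subset_left hT Finset.sdiff_disjoint⟩
    obtain rfl : j = 0 := by omega
    exact ⟨hT.trans Finset.sdiff_subset, hTb⟩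
  | succ i ih =>
    have hstep : ∀ p ≤ i, greedy A p (i + 1 - p) = A (i + 1) \ greedy A p (i - p) := by
      intro p hp
      rw [Nat.succ_sub hp, greedy, show p + (i - p) + 1 = i + 1 by omega]
    have hself := hS (i + 1) le_rfl
    simp only [Nat.sub_self, greedy, surplus] at hself
    have hcardS := Finset.card_sdiff (s := S) (t := A (i + 1))
    have hcardS' : (S ∩ A (i + 1)).card ≤ (A (i + 1)).card :=
      Finset.card_le_card Finset.inter_subset_right
    obtain ⟨T, hTW, hTb, hT⟩ := exists_subset_of_chain (A (i + 1) \ S) (Finset.range (i + 1))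
      (fun p => greedy A p (i - p))
      (fun p hp q hq => greedy_chain A i p (by simpa [Nat.lt_succ_iff] using hp) q
        (by simpa [Nat.lt_succ_iff] using hq))
      (fun p => surplus A b p (i - p))
      (fun p hp => hH p _ (by have := Finset.mem_range.1 hp; omega)) (b := b) (by omega) (by
        intro p hp
        have hpi : p ≤ i := by have := Finset.mem_range.1 hp; omega
        have h := hS p (by omega)
        have heq : (A (i + 1) \ S) \ greedy A p (i - p) = greedy A p (i + 1 - p) \ S := by
          rw [hstep p hpi, sdiff_right_comm]
        have hcard := Finset.card_sdiff (s := S) (t := greedy A p (i + 1 - p))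
        have hcard' : (S ∩ greedy A p (i + 1 - p)).card ≤ (greedy A p (i + 1 - p)).card :=
          Finset.card_le_card Finset.inter_subset_right
        rw [heq]
        rw [Nat.sub_add_comm hpi] at h hcard hcard' ⊢
        rw [surplus] at h
        omega)
    obtain ⟨φ, hφ, hdis, hlast⟩ := ih (fun p k hpk => hH p k (by omega)) T
      (fun p hp => hT p (by simpa [Nat.lt_succ_iff] using hp))
    refine ⟨fun j => if j ≤ i then φ j else T, fun j hj => ?_, fun j hj => ?_, ?_⟩
    · by_cases h : j ≤ i
      · simpa [h] using hφ j h
      · obtain rfl : j = i + 1 := by omega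
        simpa using ⟨hTW.trans Finset.sdiff_subset, hTb⟩
    · by_cases h : j + 1 ≤ i
      · simpa [h, (by omega : j ≤ i)] using hdis j (by omega)
      · obtain rfl : j = i := by omega
        simpa using hlast
    · simpa using Finset.disjoint_of_subset_left hTW Finset.sdiff_disjoint

theorem exists_path_coloring (A : ℕ → Finset ℕ) (b i : ℕ)
    (hH : ∀ p k, p + k ≤ i → 0 ≤ surplus A b p k) :
    ∃ φ : ℕ → Finset ℕ, (∀ j ≤ i, φ j ⊆ A j ∧ (φ j).card = b) ∧
      ∀ j < i, Disjoint (φ j) (φ (j + 1)) := by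
  obtain ⟨φ, h₁, h₂, -⟩ := exists_path_coloring_avoiding A b i hH ∅
    (fun p hp => by simpa using hH p (i - p) (by omega))
  exact ⟨φ, h₁, h₂⟩

theorem greedy_subset (A : ℕ → Finset ℕ) (p k : ℕ) : greedy A p k ⊆ A (p + k) := by
  cases k with
  | zero => exact subset_rfl
  | succ k => exact Finset.sdiff_subset

theorem card_le_card_greedy_succ_add (A : ℕ → Finset ℕ) (p k : ℕ) :
    (A (p + k + 1)).card ≤ (greedy A p (k + 1)).card + (greedy A p k).card :=
  Finset.card_le_card_sdiff_add_card

theorem card_le_card_greedy_succ_add_of_inter (A : ℕ → Finset ℕ) (p k : ℕ) {c : ℕ}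
    (h : (A (p + k) ∩ A (p + k + 1)).card ≤ c) :
    (A (p + k + 1)).card ≤ (greedy A p (k + 1)).card + c := by
  have h₁ := Finset.card_sdiff_add_card_inter (A (p + k + 1)) (greedy A p k)
  have h₂ : (A (p + k + 1) ∩ greedy A p k).card ≤ c := by
    refine le_trans (Finset.card_le_card ?_) h
    rw [Finset.inter_comm]
    exact Finset.inter_subset_inter_right (greedy_subset A p k)
  rw [greedy]
  omega

theorem surplus_add_two (A : ℕ → Finset ℕ) (b p k : ℕ) :
    surplus A b p k + (A (p + k + 2)).card - 2 * b ≤ surplus A b p (k + 2) := by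
  have := card_le_card_greedy_succ_add A p (k + 1)
  simp only [surplus]
  rw [show p + (k + 1) + 1 = p + k + 2 by omega] at this
  omega

theorem surplus_add_one (A : ℕ → Finset ℕ) (b p k : ℕ) {c : ℕ}
    (h : (A (p + k) ∩ A (p + k + 1)).card ≤ c) :
    surplus A b p k + (A (p + k + 1)).card - c - b ≤ surplus A b p (k + 1) := by
  have := card_le_card_greedy_succ_add_of_inter A p k h
  simp only [surplus]
  omega

/-- The numerical condition under which a path on `m` vertices, joined at both ends to a
precolored vertex, can be colored. -/
def PathBound (a b c m : ℕ) : Prop :=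
  b + min b c ≤ a ∧ (2 * c ≤ a → m * (b + c) + 2 * min b c ≤ m * a + c) ∧
  (a < 2 * c → ∀ k,
    (m = 2 * k + 1 → b + (k + 1) * (2 * b) ≤ (k + 1) * a) ∧
    (m = 2 * k + 2 → min c (a - b) + (k + 2) * (2 * b) ≤ (k + 2) * a))

theorem PathBound.add_le {a b c m : ℕ} (h : PathBound a b c m) (hc : 2 * c ≤ a) :
    b + c ≤ a := by
  obtain ⟨h₁, h₂, -⟩ := h
  have h₂ := h₂ hc
  rcases le_total b c with hbc | hbc
  · rw [min_eq_left hbc] at h₁ h₂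
    by_cases hcb : 2 * b ≤ c
    · omega
    · by_contra hlt
      have : m * a ≤ m * (b + c) := Nat.mul_le_mul_left _ (by omega)
      omega
  · rwa [min_eq_right hbc] at h₁

theorem PathBound.two_mul_le {a b c m : ℕ} (h : PathBound a b c m) (hc : a < 2 * c) :
    b ≤ c ∧ 2 * b ≤ a := by
  have := h.1
  omega

theorem PathBound.succ {a b c m : ℕ} (h : PathBound a b c m) (hm : 1 ≤ m) :
    PathBound a b c (m + 1) := by
  refine ⟨h.1, fun hc => ?_, fun hc k => ⟨fun hk => ?_, fun hk => ?_⟩⟩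
  · have h₁ := h.add_le hc
    have h₂ := h.2.1 hc
    rw [add_one_mul, add_one_mul]
    omega
  · obtain ⟨hbc, hb⟩ := h.two_mul_le hc
    obtain ⟨k, rfl⟩ : ∃ j, k = j + 1 := ⟨k - 1, by omega⟩
    have h₁ := (h.2.2 hc k).2 (by omega)
    rw [show k + 1 + 1 = k + 2 by omega]
    omega
  · obtain ⟨hbc, hb⟩ := h.two_mul_le hc
    have h₁ := (h.2.2 hc k).1 (by omega)
    have : (k + 2) * (2 * b) = (k + 1) * (2 * b) + 2 * b := by ring
    have : (k + 2) * a = (k + 1) * a + a := by ring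
    omega

theorem PathBound.mono {a b c m n : ℕ} (h : PathBound a b c m) (hm : 1 ≤ m)
    (hmn : m ≤ n) : PathBound a b c n := by
  induction n, hmn using Nat.le_induction with
  | base => exact h
  | succ n hn ih => exact ih.succ (hm.trans hn)

theorem PathBound.surplus_nonneg {a b c l : ℕ} (h : PathBound a b c (l + 1)) (hl : 2 ≤ l)
    (hca : c ≤ a) (A : ℕ → Finset ℕ) (hfirst : (A 0).card = a - min b c)
    (hlast : (A l).card = a - min b c) (hA : ∀ j, 0 < j → j < l → (A j).card = a)
    (hsep : ∀ j < l, (A j ∩ A (j + 1)).card ≤ c) :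
    ∀ p k, p + k ≤ l → 0 ≤ surplus A b p k := by
  have hbe := h.1
  have hea : min b c ≤ a := by omega
  rcases le_or_gt (2 * c) a with hc | hc
  · have hbc := h.add_le hc
    have hm := h.2.1 hc
    have key : ∀ p k, p + k ≤ l → ((k : ℤ) + 1) * (a - b - c) + c
        - (if p = 0 then (min b c : ℤ) else 0) - (if p + k = l then (min b c : ℤ) else 0)
        ≤ surplus A b p k := by
      intro p k
      induction k with
      | zero =>
        intro hpk
        simp only [surplus]
        rcases Nat.eq_zero_or_pos p with rfl | hp
        · rw [hfirst, if_pos rfl, if_neg (by omega)]; zify [hea]; linarith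
        · rcases Nat.lt_or_eq_of_le hpk with hlt | rfl
          · rw [hA p hp (by omega), if_neg (by omega), if_neg (by omega)]; push_cast; linarith
          · rw [add_zero] at hlast
            rw [hlast, if_neg (by omega), if_pos rfl]; zify [hea]; linarith
      | succ k ih =>
        intro hpk
        have h₁ := ih (by omega)
        have h₂ := surplus_add_one A b p k (hsep (p + k) (by omega))
        rw [if_neg (show ¬ (p + k = l) by omega)] at h₁
        rcases Nat.lt_or_eq_of_le hpk with hlt | heq
        · rw [hA (p + k + 1) (by omega) (by omega)] at h₂
          rw [if_neg (show ¬ (p + (k + 1) = l) by omega)]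
          push_cast; linarith
        · rw [show p + k + 1 = l by omega, hlast] at h₂
          zify [hea] at h₂
          rw [if_pos heq]
          push_cast; linarith
    intro p k hpk
    refine le_trans ?_ (key p k hpk)
    have hx : (0 : ℤ) ≤ a - b - c := by omega
    have he₀ : (0 : ℤ) ≤ min b c := by omega
    have hec : (min b c : ℤ) ≤ c := by omega
    have hnn : 0 ≤ ((k : ℤ) + 1) * (a - b - c) := by positivity
    split_ifs with h₁ h₂ h₂
    · obtain rfl : k = l := by omega
      have hm' : ((k : ℤ) + 1) * (b + c) + 2 * min (b : ℤ) c ≤ (k + 1) * a + c := by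
        exact_mod_cast hm
      linarith
    all_goals linarith
  · obtain ⟨hbc, hb⟩ := h.two_mul_le hc
    rw [min_eq_left hbc] at hfirst hlast
    have heven : ∀ p k, 0 < p → p + 2 * k < l → (a : ℤ) - b ≤ surplus A b p (2 * k) := by
      intro p k hp
      induction k with
      | zero => intro hpk; simp only [surplus]; rw [hA p hp (by omega)]
      | succ k ih =>
        intro hpk
        have h₁ := ih (by omega)
        have h₂ := surplus_add_two A b p (2 * k)
        rw [hA (p + 2 * k + 2) (by omega) (by omega)] at h₂
        rw [show 2 * (k + 1) = 2 * k + 2 by ring]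
        omega
    have hzero : ∀ k, 2 * k < l → ((k : ℤ) + 1) * (a - 2 * b) ≤ surplus A b 0 (2 * k) := by
      intro k
      induction k with
      | zero =>
        intro hpk; simp only [surplus]; rw [hfirst]
        zify [show b ≤ a by omega]; linarith
      | succ k ih =>
        intro hpk
        have h₁ := ih (by omega)
        have h₂ := surplus_add_two A b 0 (2 * k)
        rw [hA (0 + 2 * k + 2) (by omega) (by omega)] at h₂
        rw [show 2 * (k + 1) = 2 * k + 2 by ring]
        push_cast; linarith
    have hzero' : ∀ k, 2 * k + 1 < l → 0 ≤ surplus A b 0 (2 * k + 1) := by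
      intro k
      induction k with
      | zero =>
        intro hpk
        have h₁ := surplus_add_one A b 0 0 (c := a - b) (by
          rw [← hfirst]; exact Finset.card_le_card Finset.inter_subset_left)
        rw [hA (0 + 0 + 1) (by omega) (by omega)] at h₁
        simp only [surplus, zero_add] at h₁ ⊢
        omega
      | succ k ih =>
        intro hpk
        have h₁ := ih (by omega)
        have h₂ := surplus_add_two A b 0 (2 * k + 1)
        rw [hA (0 + (2 * k + 1) + 2) (by omega) (by omega)] at h₂
        rw [show 2 * (k + 1) + 1 = 2 * k + 1 + 2 by ring]
        omega
    have hsepl : ∀ j, j + 1 = l → (A j ∩ A (j + 1)).card ≤ min c (a - b) := by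
      rintro j rfl
      refine le_min (hsep j (by omega)) ?_
      rw [← hlast]; exact Finset.card_le_card Finset.inter_subset_right
    intro p k hpk
    obtain ⟨k, rfl | rfl⟩ := Nat.even_or_odd' k
    · rcases Nat.lt_or_eq_of_le hpk with hlt | heq
      · rcases Nat.eq_zero_or_pos p with rfl | hp
        · refine le_trans ?_ (hzero k (by omega))
          exact mul_nonneg (by omega) (by omega)
        · have := heven p k hp hlt
          omega
      · rcases k with _ | k
        · obtain rfl : p = l := by omega
          simp only [surplus]; omega
        · have h₁ := surplus_add_two A b p (2 * k)
          rw [show 2 * (k + 1) = 2 * k + 2 by ring] at heq ⊢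
          rw [show p + 2 * k + 2 = l by omega, hlast] at h₁
          rcases Nat.eq_zero_or_pos p with rfl | hp
          · have h₂ := hzero k (by omega)
            have h₃ := (h.2.2 hc (k + 1)).1 (by omega)
            zify at h₃
            push_cast [Nat.cast_sub (show b ≤ a by omega)] at h₁
            linarith
          · have := heven p k hp (by omega)
            omega
    · rcases Nat.lt_or_eq_of_le hpk with hlt | heq
      · rcases Nat.eq_zero_or_pos p with rfl | hp
        · exact hzero' k (by omega)
        · have h₁ := heven p k hp (by omega)
          have h₂ := surplus_add_one A b p (2 * k) (hsep _ (by omega))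
          rw [hA (p + 2 * k + 1) (by omega) (by omega)] at h₂
          omega
      · have h₁ := surplus_add_one A b p (2 * k) (hsepl _ (by omega))
        rw [show p + 2 * k + 1 = l by omega, hlast] at h₁
        rcases Nat.eq_zero_or_pos p with rfl | hp
        · have h₂ := hzero k (by omega)
          have h₃ := (h.2.2 hc k).2 (by omega)
          zify [show b ≤ a by omega] at h₃ h₁
          linarith
        · have := heven p k hp (by omega)
          omega

theorem card_sdiff_ge_of_separated {A B C : Finset ℕ} {a b c : ℕ} (hA : A.card = a)
    (hC : C ⊆ B) (hCb : C.card = b) (h : (B ∩ A).card ≤ c) : a - min b c ≤ (A \ C).card := by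
  have h₁ : (C ∩ A).card ≤ c :=
    (Finset.card_le_card (Finset.inter_subset_inter_right hC)).trans h
  have h₂ : (C ∩ A).card ≤ b := hCb ▸ Finset.card_le_card Finset.inter_subset_left
  have h₃ := Finset.card_sdiff (s := C) (t := A)
  omega

theorem PathBound.freeChoosable {a b c l : ℕ} (h : PathBound a b c (l + 1)) (hl : 2 ≤ l)
    (hca : c ≤ a) : FreeChoosable (cycleGraph (l + 2)) a b c := by
  intro L hL hsep v₀ C hC hCb
  have hadj : ∀ j : ℕ, (cycleGraph (l + 2)).Adj (v₀ + Fin.ofNat (l + 2) j)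
      (v₀ + Fin.ofNat (l + 2) (j + 1)) := by
    intro j
    have : Fin.ofNat (l + 2) (j + 1) = Fin.ofNat (l + 2) j + 1 := by
      ext; simp [Fin.val_add]
    rw [cycleGraph_adj, this]
    right; abel
  set M : ℕ → Finset ℕ := fun j => L (v₀ + Fin.ofNat (l + 2) j) with hM
  have hM₀ : M 0 = L v₀ := by
    have : Fin.ofNat (l + 2) 0 = 0 := by ext; simp
    simp only [hM, this, add_zero]
  have hMl : M (l + 2) = L v₀ := by
    have : Fin.ofNat (l + 2) (l + 2) = 0 := by ext; simp
    simp only [hM, this, add_zero]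
  have hMa : ∀ j, (M j).card = a := fun j => hL _
  have hMc : ∀ j, (M j ∩ M (j + 1)).card ≤ c := fun j => hsep _ _ (hadj j)
  have hc₂ : (L v₀ ∩ M (l + 1)).card ≤ c := by
    rw [Finset.inter_comm, ← hMl]; exact hMc (l + 1)
  obtain ⟨B₁, hB₁, hB₁a⟩ := Finset.exists_subset_card_eq
    (card_sdiff_ge_of_separated (hMa 1) hC hCb (hM₀ ▸ hMc 0))
  obtain ⟨B₂, hB₂, hB₂a⟩ := Finset.exists_subset_card_eq
    (card_sdiff_ge_of_separated (hMa (l + 1)) hC hCb hc₂)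
  let A : ℕ → Finset ℕ := fun j => if j = 0 then B₁ else if j = l then B₂ else M (j + 1)
  have hA₀ : A 0 = B₁ := by simp [A]
  have hAl : A l = B₂ := by simp [A, show l ≠ 0 by omega]
  have hAM : ∀ j, A j ⊆ M (j + 1) := by
    intro j
    simp only [A]
    split_ifs with h₁ h₂
    · rw [h₁]; exact hB₁.trans Finset.sdiff_subset
    · rw [h₂]; exact hB₂.trans Finset.sdiff_subset
    · exact subset_rfl
  obtain ⟨ψ, hψ, hψd⟩ := exists_path_coloring A b l
    (h.surplus_nonneg hl hca A (by rw [hA₀, hB₁a]) (by rw [hAl, hB₂a])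
      (fun j h₁ h₂ => by simp [A, h₁.ne', h₂.ne, hMa])
      fun j _ => (Finset.card_le_card (Finset.inter_subset_inter (hAM j) (hAM (j + 1)))).trans
        (hMc (j + 1)))
  have hdis₀ : Disjoint C (ψ 0) := by
    have := (hψ 0 (by omega)).1
    rw [hA₀] at this
    exact (Finset.disjoint_of_subset_left (this.trans hB₁) Finset.sdiff_disjoint).symm
  have hdisl : Disjoint (ψ l) C := by
    have := (hψ l le_rfl).1
    rw [hAl] at this
    exact Finset.disjoint_of_subset_left (this.trans hB₂) Finset.sdiff_disjoint
  let φ : Fin (l + 2) → Finset ℕ := fun v =>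
    if (v - v₀).val = 0 then C else ψ ((v - v₀).val - 1)
  have hφd : ∀ u v, v - u = 1 → Disjoint (φ u) (φ v) := by
    intro u v huv
    have hv : v - v₀ = (u - v₀) + 1 := by rw [← huv]; abel
    simp only [φ, hv]
    generalize u - v₀ = w
    rw [Fin.val_add_one]
    have hw := w.2
    by_cases h₁ : w = Fin.last (l + 1)
    · subst h₁
      simpa using hdisl
    · simp only [if_neg h₁]
      have hlt : w.val ≠ l + 1 := fun h => h₁ (Fin.ext (by simpa using h))
      by_cases h₂ : w.val = 0
      · simpa [h₂] using hdis₀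
      · rw [if_neg h₂, if_neg (by omega)]
        have := hψd (w.val - 1) (by omega)
        rwa [show w.val - 1 + 1 = w.val + 1 - 1 by omega] at this
  refine ⟨φ, ⟨fun v => ?_, fun u v huv => ?_⟩, by simp [φ]⟩
  · simp only [φ]
    split_ifs with h₁
    · have : v = v₀ := by
        rw [← sub_eq_zero]; exact Fin.ext (by simpa using h₁)
      rw [this]; exact ⟨hC, hCb⟩
    · have hlt := (v - v₀).2
      have h₂ := hψ ((v - v₀).val - 1) (by omega)
      refine ⟨(h₂.1.trans (hAM _)).trans_eq ?_, h₂.2⟩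
      simp only [hM]
      rw [show (v - v₀).val - 1 + 1 = (v - v₀).val by omega]
      congr 1
      have : Fin.ofNat (l + 2) (v - v₀).val = v - v₀ := by ext; simp
      rw [this]; abel
  · rw [← Finset.disjoint_iff_inter_eq_empty]
    rcases cycleGraph_adj.1 huv with h | h
    · exact (hφd v u h).symm
    · exact hφd u v h

/-- The colors `(i, 0), …, (i, t - 1)`, encoded as natural numbers. -/
def colorBlock (i t : ℕ) : Finset ℕ := (Finset.range t).image (Nat.pair i)

theorem mem_colorBlock {i t k : ℕ} :
    k ∈ colorBlock i t ↔ k.unpair.1 = i ∧ k.unpair.2 < t := by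
  simp only [colorBlock, Finset.mem_image, Finset.mem_range]
  constructor
  · rintro ⟨j, hj, rfl⟩; simpa using hj
  · rintro ⟨rfl, h⟩; exact ⟨_, h, Nat.pair_unpair k⟩

theorem card_colorBlock (i t : ℕ) : (colorBlock i t).card = t := by
  rw [colorBlock, Finset.card_image_of_injective, Finset.card_range]
  intro j k h
  simpa using h

theorem disjoint_colorBlock {i j : ℕ} (h : i ≠ j) (s t : ℕ) :
    Disjoint (colorBlock i s) (colorBlock j t) := by
  rw [Finset.disjoint_left]
  intro k hk hk'
  rw [mem_colorBlock] at hk hk'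
  exact h (hk.1.symm.trans hk'.1)

theorem FreeChoosable.add_min_le {V : Type*} [Finite V] {G : SimpleGraph V} {a b c : ℕ}
    (hG : FreeChoosable G a b c) (hba : b ≤ a) {u v : V} (huv : G.Adj u v) :
    b + min b c ≤ a := by
  have huv' := huv.ne
  have hH : FreeChoosable (⊤ : SimpleGraph Bool) a b c := by
    refine hG.of_induced (fun t => cond t u v) (fun i j => ?_) (fun i j => ?_)
    · cases i <;> cases j <;> simp [huv', huv'.symm]
    · cases i <;> cases j <;> simp [huv, huv.symm]
  set e := min b c
  let M := colorBlock 1 (a - e) ∪ colorBlock 0 e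
  have hinter : (colorBlock 0 a ∩ M).card ≤ c := by
    refine (Finset.card_le_card (t := colorBlock 0 e) fun k => ?_).trans (by
      rw [card_colorBlock]; omega)
    simp only [M, Finset.mem_inter, Finset.mem_union, mem_colorBlock]
    omega
  obtain ⟨φ, hφ, hφC⟩ := hH (fun t => cond t (colorBlock 0 a) M)
    (fun t => by
      cases t
      · simp only [cond_false, M]
        rw [Finset.card_union_of_disjoint (disjoint_colorBlock (by omega) _ _), card_colorBlock,
          card_colorBlock]
        omega
      · simp [card_colorBlock])
    (fun s t hst => by
      cases s <;> cases t <;> simp at hst ⊢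
      · rwa [Finset.inter_comm]
      · exact hinter)
    true (colorBlock 0 b) (fun k => by simp only [cond_true, mem_colorBlock]; omega)
    (card_colorBlock _ _)
  have hdis := hφ.2 true false (by simp)
  rw [hφC, ← Finset.disjoint_iff_inter_eq_empty, Finset.disjoint_left] at hdis
  have hsub : φ false ⊆ colorBlock 1 (a - e) := by
    intro k hk
    have h₁ := (hφ.1 false).1 hk
    have h₂ : ¬ k ∈ colorBlock 0 b := fun h => hdis h hk
    have h₃ : e ≤ b := min_le_left _ _
    simp only [cond_false, M, Finset.mem_union, mem_colorBlock] at h₁ h₂ ⊢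
    omega
  have := Finset.card_le_card hsub
  rw [(hφ.1 false).2, card_colorBlock] at this
  omega

/-- Lists on a cycle in which consecutive vertices `i`, `i + 1` share `x i` colors, no color
outside the list of vertex `0` being shared by three vertices. -/
def cyclicList (a l : ℕ) (x : ℕ → ℕ) (i : ℕ) : Finset ℕ :=
  if i = 0 then colorBlock 0 a
  else if i = l + 1 then
    colorBlock (l + 1) (a - x l - x 0) ∪ colorBlock l (x l) ∪ colorBlock 0 (x 0)
  else colorBlock i (a - x (i - 1)) ∪ colorBlock (i - 1) (x (i - 1))

theorem mem_cyclicList {a l : ℕ} {x : ℕ → ℕ} {i k : ℕ} : k ∈ cyclicList a l x i ↔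
    if i = 0 then k.unpair.1 = 0 ∧ k.unpair.2 < a
    else if i = l + 1 then (k.unpair.1 = l + 1 ∧ k.unpair.2 < a - x l - x 0) ∨
      (k.unpair.1 = l ∧ k.unpair.2 < x l) ∨ (k.unpair.1 = 0 ∧ k.unpair.2 < x 0)
    else (k.unpair.1 = i ∧ k.unpair.2 < a - x (i - 1)) ∨
      (k.unpair.1 = i - 1 ∧ k.unpair.2 < x (i - 1)) := by
  unfold cyclicList
  split_ifs <;> simp only [Finset.mem_union, mem_colorBlock, or_assoc]

theorem FreeChoosable.cycle_sum_le {a b c l : ℕ}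
    (h : FreeChoosable (cycleGraph (l + 2)) a b c) (hl : 2 ≤ l) (hba : b ≤ a) (x : ℕ → ℕ)
    (hxb : x 0 ≤ b) (hxc : ∀ i ≤ l, x i ≤ c) (hxa : ∀ i < l, x i + x (i + 1) ≤ a)
    (hxl : x l + x 0 ≤ a) :
    (l + 1) * b + x 0 + ∑ j ∈ Finset.range (l + 1), x j ≤ (l + 1) * a := by
  have hxa' : ∀ i, 0 < i → i ≤ l → x (i - 1) + x i ≤ a := fun i hi hil => by
    have := hxa (i - 1) (by omega)
    rwa [Nat.sub_add_cancel hi] at this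
  have hcard : ∀ i ≤ l + 1, (cyclicList a l x i).card = a := by
    intro i hi
    unfold cyclicList
    split_ifs with h₁ h₂
    · exact card_colorBlock _ _
    · rw [Finset.card_union_of_disjoint, Finset.card_union_of_disjoint, card_colorBlock,
        card_colorBlock, card_colorBlock]
      · omega
      · exact disjoint_colorBlock (by omega) _ _
      · rw [Finset.disjoint_union_left]
        exact ⟨disjoint_colorBlock (by omega) _ _, disjoint_colorBlock (by omega) _ _⟩
    · rw [Finset.card_union_of_disjoint (disjoint_colorBlock (by omega) _ _), card_colorBlock,
        card_colorBlock]
      have := hxa' i (by omega) (by omega)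
      omega
  have hsep : ∀ i ≤ l, (cyclicList a l x i ∩ cyclicList a l x (i + 1)).card ≤ c := by
    intro i hi
    refine (Finset.card_le_card (t := colorBlock i (x i)) fun k hk => ?_).trans (by
      rw [card_colorBlock]; exact hxc i hi)
    rw [Finset.mem_inter, mem_cyclicList, mem_cyclicList] at hk
    rw [mem_colorBlock]
    obtain ⟨hk₁, hk₂⟩ := hk
    rw [if_neg (by omega), Nat.add_sub_cancel] at hk₂
    by_cases h₁ : i = l
    · subst h₁
      rw [if_neg (by omega), if_neg (by omega)] at hk₁
      rw [if_pos rfl] at hk₂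
      omega
    · rw [if_neg (by omega)] at hk₂
      split_ifs at hk₁ <;> omega
  have hsep₀ : (cyclicList a l x (l + 1) ∩ cyclicList a l x 0).card ≤ c := by
    refine (Finset.card_le_card (t := colorBlock 0 (x 0)) fun k hk => ?_).trans (by
      rw [card_colorBlock]; exact hxc 0 (by omega))
    rw [Finset.mem_inter, mem_cyclicList, mem_cyclicList] at hk
    rw [mem_colorBlock]
    rw [if_pos rfl, if_neg (by omega), if_pos rfl] at hk
    omega
  have hsucc : ∀ u v : Fin (l + 2), u - v = 1 →
      u.val = v.val + 1 ∨ (v.val = l + 1 ∧ u.val = 0) := by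
    intro u v huv
    obtain rfl : u = v + 1 := by rw [← huv]; abel
    rw [Fin.val_add_one]
    split_ifs with h₁
    · subst h₁; simp
    · exact Or.inl rfl
  have hsep₁ : ∀ u v : Fin (l + 2), u - v = 1 →
      (cyclicList a l x v.val ∩ cyclicList a l x u.val).card ≤ c := by
    intro u v huv
    rcases hsucc u v huv with h₁ | ⟨h₁, h₂⟩
    · rw [h₁]; exact hsep _ (by omega)
    · rw [h₁, h₂]; exact hsep₀
  obtain ⟨φ, ⟨hφ, hφd⟩, hφ₀⟩ := h (fun v => cyclicList a l x v.val)
    (fun v => hcard _ (by omega))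
    (fun u v huv => by
      rcases cycleGraph_adj.1 huv with h₁ | h₁
      · rw [Finset.inter_comm]; exact hsep₁ u v h₁
      · exact hsep₁ v u h₁)
    0 (colorBlock 0 b)
    (fun k hk => by
      rw [mem_colorBlock] at hk
      rw [mem_cyclicList, if_pos (by simp)]
      omega) (card_colorBlock _ _)
  let F : ℕ → Finset ℕ := fun i => φ (Fin.ofNat (l + 2) i)
  have hF₀ : F 0 = colorBlock 0 b := hφ₀
  have hF : ∀ i ≤ l + 1, F i ⊆ cyclicList a l x i ∧ (F i).card = b := by
    intro i hi
    have h₁ := hφ (Fin.ofNat (l + 2) i)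
    beta_reduce at h₁
    rwa [Fin.val_ofNat, Nat.mod_eq_of_lt (by omega)] at h₁
  have hFd : ∀ i, Disjoint (F i) (F (i + 1)) := by
    intro i
    rw [Finset.disjoint_iff_inter_eq_empty]
    refine hφd _ _ (cycleGraph_adj.2 (Or.inr ?_))
    have : Fin.ofNat (l + 2) (i + 1) = Fin.ofNat (l + 2) i + 1 := by
      ext; simp [Fin.val_add]
    rw [this]; abel
  have hFl : Disjoint (F (l + 1)) (F 0) := by
    have h₁ := hFd (l + 1)
    rwa [show F (l + 1 + 1) = F 0 by simp only [F]; congr 1; ext; simp] at h₁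
  set p : ℕ → ℕ := fun i => ((F i).filter fun k => k.unpair.1 = i).card with hp
  have hp₁ : b ≤ p 1 := by
    rw [← (hF 1 (by omega)).2]
    refine Finset.card_le_card fun k hk => ?_
    have h₁ := (hF 1 (by omega)).1 hk
    have h₂ : ¬ k ∈ F 0 := Finset.disjoint_right.1 (hFd 0) hk
    rw [hF₀, mem_colorBlock] at h₂
    rw [mem_cyclicList, if_neg (by omega), if_neg (by omega)] at h₁
    rw [Finset.mem_filter]
    refine ⟨hk, ?_⟩
    simp only [Nat.sub_self] at h₁
    omega
  have hstep : ∀ i, 1 ≤ i → i ≤ l → b + p i + x (i - 1) ≤ p (i + 1) + a := by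
    intro i hi hil
    have hxi := hxa' i hi hil
    have hsplit := Finset.card_filter_add_card_filter_not (s := F (i + 1))
      (fun k => k.unpair.1 = i + 1)
    rw [(hF (i + 1) (by omega)).2] at hsplit
    have hdis : Disjoint ((F (i + 1)).filter fun k => ¬ k.unpair.1 = i + 1)
        ((F i).filter fun k => k.unpair.1 = i) :=
      Finset.disjoint_of_subset_left (Finset.filter_subset _ _)
        (Finset.disjoint_of_subset_right (Finset.filter_subset _ _) (hFd i).symm)
    have hle : ((F (i + 1)).filter fun k => ¬ k.unpair.1 = i + 1) ∪
        ((F i).filter fun k => k.unpair.1 = i) ⊆ colorBlock i (a - x (i - 1)) := by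
      intro k hk
      rw [Finset.mem_union, Finset.mem_filter, Finset.mem_filter] at hk
      rw [mem_colorBlock]
      rcases hk with ⟨hk, hne⟩ | ⟨hk, he⟩
      · have h₁ := (hF (i + 1) (by omega)).1 hk
        rw [mem_cyclicList, if_neg (by omega), Nat.add_sub_cancel] at h₁
        by_cases h₂ : i = l
        · subst h₂
          have h₃ : ¬ k ∈ F 0 := Finset.disjoint_left.1 hFl hk
          rw [hF₀, mem_colorBlock] at h₃
          rw [if_pos rfl] at h₁
          omega
        · rw [if_neg (by omega)] at h₁
          omega
      · have h₁ := (hF i (by omega)).1 hk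
        rw [mem_cyclicList, if_neg (by omega), if_neg (by omega)] at h₁
        omega
    have hcle := Finset.card_le_card hle
    rw [Finset.card_union_of_disjoint hdis, card_colorBlock] at hcle
    simp only [hp]
    omega
  have hpl : p (l + 1) + x l + x 0 ≤ a := by
    have hle : ((F (l + 1)).filter fun k => k.unpair.1 = l + 1) ⊆
        colorBlock (l + 1) (a - x l - x 0) := by
      intro k hk
      rw [Finset.mem_filter] at hk
      have h₁ := (hF (l + 1) le_rfl).1 hk.1
      rw [mem_cyclicList, if_neg (by omega), if_pos rfl] at h₁
      rw [mem_colorBlock]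
      omega
    have hcle := Finset.card_le_card hle
    rw [card_colorBlock] at hcle
    simp only [hp]
    omega
  have hind : ∀ i ≤ l, (i + 1) * b + ∑ j ∈ Finset.range i, x j ≤ p (i + 1) + i * a := by
    intro i
    induction i with
    | zero => intro _; simpa using hp₁
    | succ i ih =>
      intro hi
      have h₁ := ih (by omega)
      have h₂ := hstep (i + 1) (by omega) hi
      rw [Nat.add_sub_cancel] at h₂
      rw [Finset.sum_range_succ]
      linarith
  have h₁ := hind l le_rfl
  rw [Finset.sum_range_succ]
  linarith

theorem sum_range_alternating (e u w k : ℕ) :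
    ∑ j ∈ Finset.range (2 * k + 1), (if j = 0 then e else if j % 2 = 1 then u else w) =
      e + k * (u + w) := by
  induction k with
  | zero => simp
  | succ k ih =>
    rw [show 2 * (k + 1) + 1 = 2 * k + 1 + 1 + 1 by omega, Finset.sum_range_succ,
      Finset.sum_range_succ, ih, if_neg (by omega), if_pos (by omega), if_neg (by omega),
      if_neg (by omega)]
    ring

theorem FreeChoosable.cycle_alternating_le {a b c l e u w : ℕ}
    (h : FreeChoosable (cycleGraph (l + 2)) a b c) (hl : 2 ≤ l) (hba : b ≤ a) (heb : e ≤ b)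
    (hec : e ≤ c) (hu : u ≤ c) (hw : w ≤ c) (huw : u + w ≤ a) (heu : e + u ≤ a)
    (hew : e + w ≤ a) (k : ℕ) :
    (l = 2 * k → (2 * k + 1) * b + 2 * e + k * (u + w) ≤ (2 * k + 1) * a) ∧
      (l = 2 * k + 1 → (2 * k + 2) * b + 2 * e + k * (u + w) + u ≤ (2 * k + 2) * a) := by
  have hsum := h.cycle_sum_le hl hba (fun j => if j = 0 then e else if j % 2 = 1 then u else w)
    (by simpa using heb) (fun i _ => by split_ifs <;> assumption)
    (fun i _ => by rw [if_neg (Nat.succ_ne_zero i)]; split_ifs <;> omega)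
    (by rw [if_neg (by omega), if_pos rfl]; split_ifs <;> omega)
  simp only [if_true] at hsum
  refine ⟨?_, ?_⟩ <;> rintro rfl
  · rw [sum_range_alternating] at hsum
    linarith
  · rw [Finset.sum_range_succ, sum_range_alternating, if_neg (by omega), if_pos (by omega)] at hsum
    linarith

theorem FreeChoosable.pathBound {a b c l : ℕ} (h : FreeChoosable (cycleGraph (l + 2)) a b c)
    (hl : 2 ≤ l) (hba : b ≤ a) : PathBound a b c (l + 1) := by
  have hab : b + min b c ≤ a :=
    h.add_min_le hba (u := 0) (v := 1) (cycleGraph_adj.2 (Or.inr (by simp)))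
  refine ⟨hab, fun hc => ?_, fun hc k => ⟨fun hk => ?_, fun hk => ?_⟩⟩
  · have key := h.cycle_alternating_le hl hba (min_le_left b c) (min_le_right b c) le_rfl le_rfl
      (by omega) (by omega) (by omega) (l / 2)
    rcases Nat.even_or_odd' l with ⟨k, rfl | rfl⟩
    · have := key.1 (by omega)
      rw [show 2 * k / 2 = k by omega] at this
      linarith
    · have := key.2 (by omega)
      rw [show (2 * k + 1) / 2 = k by omega] at this
      linarith
  · have hbc : b ≤ c := by omega
    have := (h.cycle_alternating_le hl hba (e := b) (u := a / 2) (w := a - a / 2) le_rfl hbc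
      (by omega) (by omega) (by omega) (by omega) (by omega) k).1 (by omega)
    rw [show a / 2 + (a - a / 2) = a by omega] at this
    linarith
  · have hbc : b ≤ c := by omega
    obtain ⟨u, hu⟩ : ∃ u, u = min c (a - b) := ⟨_, rfl⟩
    have := (h.cycle_alternating_le hl hba (e := b) (u := u) (w := a - u) le_rfl hbc
      (by omega) (by omega) (by omega) (by omega) (by omega) k).2 (by omega)
    rw [show u + (a - u) = a by omega] at this
    rw [← hu]
    linarith

theorem freeChoosable_cycleGraph_mono {a b c m n : ℕ} (hm : 4 ≤ m) (hmn : m ≤ n) (hba : b ≤ a)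
    (hca : c ≤ a) (h : FreeChoosable (cycleGraph m) a b c) :
    FreeChoosable (cycleGraph n) a b c := by
  obtain ⟨l, rfl⟩ : ∃ l, m = l + 2 := ⟨m - 2, by omega⟩
  obtain ⟨k, rfl⟩ : ∃ k, n = k + 2 := ⟨n - 2, by omega⟩
  exact ((h.pathBound (by omega) hba).mono (by omega) (by omega)).freeChoosable (by omega) hca

theorem FreeChoosable.cycleGraph_of_isCycle {V : Type*} [Finite V] {G : SimpleGraph V}
    {a b c : ℕ} (h : FreeChoosable G a b c) (hG : IsCactus G) {u : V} {p : G.Walk u u}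
    (hp : p.IsCycle) : FreeChoosable (cycleGraph p.length) a b c := by
  obtain ⟨f, hf, hfp, -, hadj⟩ := exists_cycle_parametrization p hp
  refine h.of_induced f hf fun i j => ?_
  rw [hadj]
  refine ⟨fun hij => p.adj_of_mem_edges hij, fun hij => ?_⟩
  by_contra hmem
  refine not_reachable_deleteEdges_of_mem_cycle hG.2 p hp (hfp i) (hfp j) hij.ne
    (Adj.reachable ?_)
  rw [deleteEdges_adj]
  exact ⟨hij, hmem⟩

theorem fsep_cactus {V : Type*} [Fintype V] (G : SimpleGraph V) (g a b : ℕ)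
    (hG : IsCactus G) (hcyc : ∃ (u : V) (p : G.Walk u u), p.IsCycle)
    (hgirth : G.egirth = (g : ℕ∞)) (hb : 1 ≤ b) (hba : b ≤ a)
    (hcond : 4 ≤ g ∨ ∀ (u : V) (p : G.Walk u u), p.IsCycle → p.length = 3) :
    fsep G a b = fsep (cycleGraph g) a b := by
  obtain ⟨u₀, p₀, hp₀⟩ := hcyc
  have hacyc : ¬ G.IsAcyclic := fun h => h p₀ hp₀
  obtain ⟨u, p, hp, hlen⟩ := exists_egirth_eq_length.2 hacyc
  have hpg : p.length = g := by
    rw [hgirth] at hlen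
    exact_mod_cast hlen.symm
  have hmin : ∀ v (q : G.Walk v v), q.IsCycle → g ≤ q.length := by
    intro v q hq
    have := egirth_le_length hq
    rw [hgirth] at this
    exact_mod_cast this
  have hg : 3 ≤ g := hpg ▸ hp.three_le_length
  unfold fsep
  congr 1
  ext c
  refine and_congr_right fun hca => ⟨fun h => hpg ▸ h.cycleGraph_of_isCycle hG hp, fun h => ?_⟩
  have hab : b + min b c ≤ a := by
    obtain ⟨l, rfl⟩ : ∃ l, g = l + 2 := ⟨g - 2, by omega⟩
    exact h.add_min_le hba (u := 0) (v := 1) (cycleGraph_adj.2 (Or.inr (by simp)))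
  refine freeChoosable_of_cycles hab G hG.2 fun v q hq => ?_
  rcases hcond with h₄ | h₃
  · exact freeChoosable_cycleGraph_mono h₄ (hmin v q hq) hba hca h
  · rwa [h₃ v q hq, ← h₃ u p hp, hpg]
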